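/- Let $F \in \mathbb{R}^{M\times N}$ have rank $N$, with $M > N$ and $M \ge 3$, and suppose that the rows of $F$ (the frame vectors) are not all equal; this is automatic when $N \ge 2$. Let $F^\dagger = (F^*F)^{-1}F^*$ be the pseudo-inverse of $F$. For a composition $m = (m_1,\dots,m_K)$ of $M$ (positive integers with sum $M$), let $I_1,\dots,I_K$ be the consecutive blocks of indices of $\{1,\dots,M\}$ of sizes $m_1,\dots,m_K$, and call $z\in\mathbb{R}^M$ $m$-descending if $z_k \ge z_\ell$ whenever $k\in I_i$ and $\ell\in I_{i+1}$ for some $1\le i<K$. A Variant I initial codeword compatible with $m$ is a vector $\hat y_{\mathrm{init}} = (\mu_1,\dots,\mu_1,\dots,\mu_K,\dots,\mu_K)$ in which $\mu_i$ appears $m_i$ times and $\mu_1>\dots>\mu_K$ are real. A Variant I frame permutation quantization (FPQ) encoding of $x\in\mathbb{R}^N$ is any $M\times M$ permutation matrix $P$ such that $PFx$ is $m$-descending (there may be several if $Fx$ has ties); its canonical reconstruction is $\hat x = F^\dagger P^{-1}\hat y_{\mathrm{init}}$. Canonical reconstruction is consistent for $(m,\hat y_{\mathrm{init}})$ if, for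 every $x\in\mathbb{R}^N$ and every encoding $P$ of $x$, the vector $PF\hat x$ is $m$-descending. Then canonical reconstruction is consistent for every composition $m$ of $M$ and every Variant I initial codeword $\hat y_{\mathrm{init}}$ compatible with $m$ if and only if $M = N+1$ and $FF^\dagger = I_M - \frac1M J_M$, where $J_M$ is the $M\times M$ all-ones matrix. -/

import Mathlib

/-- The differencing matrix `D(m)` of a composition `m` of `M`: its rows are indexed by the pairs
`(k, ℓ)` with `k` in some block and `ℓ` in the next block, and the row of `(k, ℓ)` is
`e_kᵀ - e_ℓᵀ`.  (`c.index k` is the number of the block that contains the index `k`.) -/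
def diffMatrix {M : ℕ} (c : Composition M) :
    Matrix {p : Fin M × Fin M // (c.index p.1 : ℕ) + 1 = (c.index p.2 : ℕ)} (Fin M) ℝ :=
  Matrix.of fun p => Pi.single p.1.1 1 - Pi.single p.1.2 1

/-- `z` is `m`-descending: `D(m) z ≥ 0` elementwise. -/
def IsDescending {M : ℕ} (c : Composition M) (z : Fin M → ℝ) : Prop :=
  ∀ p, 0 ≤ (diffMatrix c).mulVec z p

/-- `y` is a Variant I initial codeword compatible with the composition `m`:
`y = (μ₁, …, μ₁, …, μ_K, …, μ_K)` with `μ_i` repeated `m_i` times and `μ₁ > ⋯ > μ_K`. -/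
def IsVariantICodeword {M : ℕ} (c : Composition M) (y : Fin M → ℝ) : Prop :=
  ∃ μ : Fin c.length → ℝ, StrictAnti μ ∧ ∀ k, y k = μ (c.index k)

/-- The permutation matrix of `σ` is a Variant I FPQ encoding of `x` with frame `F` and
composition `m`: `P F x` is `m`-descending. If `F x` has ties, there may be several. -/
def IsVariantIEncoding {M N : ℕ} (F : Matrix (Fin M) (Fin N) ℝ) (c : Composition M)
    (x : Fin N → ℝ) (σ : Equiv.Perm (Fin M)) : Prop :=
  IsDescending c ((σ.permMatrix ℝ).mulVec (F.mulVec x))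

/-- The pseudo-inverse `F† = (F*F)⁻¹ F*` of a matrix `F` of full column rank. -/
noncomputable def pinv {M N : ℕ} (F : Matrix (Fin M) (Fin N) ℝ) :
    Matrix (Fin N) (Fin M) ℝ :=
  (F.transpose * F)⁻¹ * F.transpose

/-- The linear reconstruction `x̂ = R ŷ`, where `ŷ = P⁻¹ ŷ_init`. -/
noncomputable def linearReconstruction {M N : ℕ} (R : Matrix (Fin N) (Fin M) ℝ)
    (y : Fin M → ℝ) (σ : Equiv.Perm (Fin M)) : Fin N → ℝ :=
  R.mulVec ((σ.permMatrix ℝ)⁻¹.mulVec y)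

/-- The linear reconstruction `x̂ = R ŷ` is consistent with Variant I FPQ encoding using the frame
`F`, the composition `m` and the initial codeword `y`: `D(m) P F x̂ ≥ 0` for every `x` and every
encoding `P` of `x`. -/
def IsConsistent {M N : ℕ} (F : Matrix (Fin M) (Fin N) ℝ) (R : Matrix (Fin N) (Fin M) ℝ)
    (c : Composition M) (y : Fin M → ℝ) : Prop :=
  ∀ (x : Fin N → ℝ) (σ : Equiv.Perm (Fin M)), IsVariantIEncoding F c x σ →
    IsDescending c ((σ.permMatrix ℝ).mulVec (F.mulVec (linearReconstruction R y σ)))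

/-!
Every permutation encodes `x = 0`, so consistency for the finest composition says that `A = F F†`
maps `y ∘ σ⁻¹`, for every strictly decreasing `y` and every `σ`, to a vector that is again sorted
by `σ`. Letting `y` acquire ties, `A` weakly preserves the order of the entries of every vector, so
the functional `z ↦ (A z)_k - (A z)_ℓ` vanishes wherever `z_k = z_ℓ` and is a multiple of
`z_k - z_ℓ`. Hence `A = a I + 1 vᵀ` with `a ≥ 0`, and all such matrices preserve order. Since
`A F = F` and the rows of `F` differ, `a = 1`. The eigenvalue `1 + ∑ v` of the projection `A` at the
all-ones vector is `0` or `1`, and the trace `N = M + ∑ v` with `N < M` leaves only `∑ v = -1`, that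
is, `M = N + 1`. As `A` is symmetric, `v` is constant.
-/

open Matrix

section OrderPreserving

variable {ι R : Type*} [Fintype ι] [CommRing R] [PartialOrder R]

/-- The linear map `A` weakly preserves the order of the entries of every vector. Ties are included:
entries that are equal in `z` are equal in `A z`. -/
def IsOrderPreserving (A : Matrix ι ι R) : Prop :=
  ∀ (z : ι → R) (k l : ι), z l ≤ z k → (A *ᵥ z) l ≤ (A *ᵥ z) k

theorem IsOrderPreserving.mulVec_apply_eq {A : Matrix ι ι R} (hA : IsOrderPreserving A)
    {z : ι → R} {k l : ι} (h : z k = z l) : (A *ᵥ z) k = (A *ᵥ z) l :=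
  (hA z l k h.le).antisymm (hA z k l h.ge)

variable [DecidableEq ι] [IsOrderedRing R]

theorem isOrderPreserving_smul_one_add_replicateRow {a : R} (ha : 0 ≤ a) (v : ι → R) :
    IsOrderPreserving (a • (1 : Matrix ι ι R) + replicateRow ι v) := by
  intro z k l hlk
  simpa [add_mulVec, smul_mulVec, replicateRow_mulVec_eq_const] using
    mul_le_mul_of_nonneg_left hlk ha

theorem IsOrderPreserving.exists_eq_smul_one_add_replicateRow [Nontrivial ι] {A : Matrix ι ι R}
    (hA : IsOrderPreserving A) :
    ∃ (a : R) (v : ι → R), 0 ≤ a ∧ A = a • (1 : Matrix ι ι R) + replicateRow ι v := by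
  choose i hi using exists_ne (α := ι)
  have off_diagonal (k j : ι) (hkj : k ≠ j) : A k j = A (i j) j := by
    simpa using hA.mulVec_apply_eq (z := Pi.single j 1) (k := k) (l := i j) (by simp [hkj, hi j])
  have diagonal (k l : ι) : A k k - A (i k) k = A l l - A (i l) l := by
    obtain rfl | hkl := eq_or_ne k l
    · rfl
    have apply_pair (i : ι) : (A *ᵥ (Pi.single k 1 + Pi.single l 1)) i = A i k + A i l := by
      simp [mulVec_add]
    have tie : A k k + A k l = A l k + A l l := by
      rw [← apply_pair, ← apply_pair]
      exact hA.mulVec_apply_eq (by simp [hkl, hkl.symm])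
    linear_combination tie + off_diagonal l k hkl.symm - off_diagonal k l hkl
  obtain ⟨p⟩ : Nonempty ι := inferInstance
  refine ⟨A p p - A (i p) p, fun j => A (i j) j, ?_, ?_⟩
  · simpa using hA (Pi.single p 1) p (i p) (by simp [hi p])
  · ext k j
    obtain rfl | hkj := eq_or_ne k j
    · simp [diagonal p k]
    · simp [hkj, off_diagonal k j hkj]

end OrderPreserving

section LeftInverse

variable {ι κ R : Type*} [Fintype ι] [DecidableEq ι] [CommRing R] [IsDomain R]

theorem eq_one_of_smul_one_add_replicateRow_mul_eq {F : Matrix ι κ R} {a : R} {v : ι → R}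
    (hne : ∃ k l, F.row k ≠ F.row l)
    (h : (a • (1 : Matrix ι ι R) + replicateRow ι v) * F = F) : a = 1 := by
  obtain ⟨k, l, hkl⟩ := hne
  obtain ⟨j, hj⟩ := Function.ne_iff.1 hkl
  have entry (i : ι) : a * F i j + v ⬝ᵥ (fun i => F i j) = F i j := by
    simpa [Matrix.add_mul, ← replicateRow_vecMul, vecMul] using congrFun₂ h i j
  have : (a - 1) * (F k j - F l j) = 0 := by linear_combination entry k - entry l
  exact sub_eq_zero.1 ((mul_eq_zero.1 this).resolve_right (sub_ne_zero.2 hj))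

theorem sum_eq_zero_or_eq_neg_one_of_isIdempotentElem [Nonempty ι] {v : ι → R}
    (h : IsIdempotentElem (1 + replicateRow ι v)) : ∑ i, v i = 0 ∨ ∑ i, v i = -1 := by
  have eigen : (1 + replicateRow ι v) *ᵥ 1 = (1 + ∑ i, v i) • 1 := by
    ext; simp [add_mulVec, replicateRow_mulVec_eq_const, dotProduct_one]
  have square := congrArg (· *ᵥ (1 : ι → R)) h.eq
  simp only [← mulVec_mulVec, eigen, mulVec_smul, smul_smul] at square
  have : (1 + ∑ i, v i) * (1 + ∑ i, v i) = 1 + ∑ i, v i := by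
    simpa using congrFun square (Classical.arbitrary ι)
  have : (∑ i, v i) * (∑ i, v i + 1) = 0 := by linear_combination this
  exact (mul_eq_zero.1 this).imp_right eq_neg_of_add_eq_zero_left

variable [CharZero R] [Fintype κ] [DecidableEq κ]

theorem sum_eq_neg_one_and_card_eq_of_mul_eq_one {F : Matrix ι κ R} {G : Matrix κ ι R} {v : ι → R}
    (hGF : G * F = 1) (hFG : F * G = 1 + replicateRow ι v)
    (hcard : Fintype.card κ < Fintype.card ι) :
    ∑ i, v i = -1 ∧ Fintype.card ι = Fintype.card κ + 1 := by
  have : Nonempty ι := Fintype.card_pos_iff.1 (Nat.zero_lt_of_lt hcard)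
  have idem : IsIdempotentElem (F * G) := by
    rw [IsIdempotentElem, Matrix.mul_assoc, ← Matrix.mul_assoc G, hGF, Matrix.one_mul]
  have trace_eq : (Fintype.card κ : R) = Fintype.card ι + ∑ i, v i := by
    simpa [hGF, hFG, trace, Finset.sum_add_distrib] using trace_mul_comm G F
  have sum_eq : ∑ i, v i = -1 := by
    refine (sum_eq_zero_or_eq_neg_one_of_isIdempotentElem (hFG ▸ idem)).resolve_left fun h => ?_
    exact hcard.ne (by simpa [h] using trace_eq)
  refine ⟨sum_eq, ?_⟩
  have : (Fintype.card ι : R) = Fintype.card κ + 1 := by linear_combination -sum_eq - trace_eq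
  exact_mod_cast this

end LeftInverse

theorem replicateRow_eq_smul_of_isSymm {ι K : Type*} [Fintype ι] [Field K] [CharZero K] {v : ι → K}
    (hv : (replicateRow ι v).IsSymm) :
    replicateRow ι v = ((∑ i, v i) / Fintype.card ι) • Matrix.of fun _ _ : ι => (1 : K) := by
  ext k l
  have : Nonempty ι := ⟨k⟩
  have constant (i : ι) : v i = v l := by simpa using hv.apply i l
  simp [Finset.sum_congr rfl fun i _ => constant i]

section Pseudoinverse

variable {M N : ℕ} {F : Matrix (Fin M) (Fin N) ℝ}

theorem pinv_mul_self (hF : F.rank = N) : pinv F * F = 1 := by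
  have hrows : LinearIndependent ℝ (Fᵀ * F).row := by
    rw [linearIndependent_iff_card_eq_finrank_span, Set.finrank, ← rank_eq_finrank_span_row,
      rank_transpose_mul_self, hF, Fintype.card_fin]
  have hdet : IsUnit (Fᵀ * F).det :=
    (isUnit_iff_isUnit_det _).1 (linearIndependent_rows_iff_isUnit.1 hrows)
  rw [pinv, Matrix.mul_assoc, nonsing_inv_mul _ hdet]

theorem isSymm_mul_pinv (F : Matrix (Fin M) (Fin N) ℝ) : (F * pinv F).IsSymm := by
  simp only [IsSymm, pinv, transpose_mul, transpose_transpose, transpose_nonsing_inv,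
    Matrix.mul_assoc]

end Pseudoinverse

section Descending

variable {M : ℕ} {c : Composition M}

theorem isDescending_iff {z : Fin M → ℝ} :
    IsDescending c z ↔ ∀ k l : Fin M, (c.index k : ℕ) + 1 = c.index l → z l ≤ z k := by
  have hrow (p) : (diffMatrix c *ᵥ z) p = z p.1.1 - z p.1.2 := by
    change (Pi.single p.1.1 1 - Pi.single p.1.2 1) ⬝ᵥ z = _
    rw [sub_dotProduct, single_one_dotProduct, single_one_dotProduct]
  simp only [IsDescending, hrow, sub_nonneg, Subtype.forall, Prod.forall]

theorem IsVariantICodeword.isDescending {y : Fin M → ℝ} (hy : IsVariantICodeword c y) :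
    IsDescending c y := by
  obtain ⟨μ, hμ, hyμ⟩ := hy
  refine isDescending_iff.2 fun k l hkl => ?_
  rw [hyμ, hyμ]
  exact hμ.antitone (Fin.le_def.2 (by omega))

theorem coe_index_ones (j : Fin M) : ((Composition.ones M).index j : ℕ) = j := by
  have h₁ := (Composition.ones M).lt_sizeUpTo_index_succ j
  have h₂ := (Composition.ones M).sizeUpTo_index_le j
  have h₃ := ((Composition.ones M).index j).2.trans_eq (Composition.ones_length M)
  simp only [Composition.ones_sizeUpTo, Fin.val_succ] at h₁ h₂
  omega

theorem isDescending_ones_iff {z : Fin M → ℝ} :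
    IsDescending (Composition.ones M) z ↔ Antitone z := by
  refine ⟨fun h => ?_, fun h => isDescending_iff.2 fun k l hkl => h ?_⟩
  · cases M with
    | zero => exact fun i => i.elim0
    | succ n =>
      exact Fin.antitone_iff_succ_le.2 fun i => isDescending_iff.1 h _ _ (by simp [coe_index_ones])
  · simp only [coe_index_ones] at hkl
    exact Fin.le_def.2 (by omega)

theorem isVariantICodeword_ones {y : Fin M → ℝ} (hy : StrictAnti y) :
    IsVariantICodeword (Composition.ones M) y := by
  refine ⟨y ∘ Fin.cast (Composition.ones_length M), fun i j hij => hy hij, fun k => ?_⟩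
  exact congrArg y (Fin.ext (coe_index_ones k).symm)

end Descending

section Consistency

variable {M N : ℕ} {F : Matrix (Fin M) (Fin N) ℝ} {R : Matrix (Fin N) (Fin M) ℝ}

theorem inv_permMatrix_mulVec {ι K : Type*} [Fintype ι] [DecidableEq ι] [CommRing K]
    (σ : Equiv.Perm ι) (y : ι → K) : (σ.permMatrix K)⁻¹ *ᵥ y = y ∘ σ.symm := by
  have : (σ.permMatrix K)⁻¹ = (σ⁻¹).permMatrix K :=
    Matrix.inv_eq_right_inv (by rw [← permMatrix_mul, inv_mul_cancel, permMatrix_one])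
  rw [this, permMatrix_mulVec, Equiv.Perm.inv_def]

theorem permMatrix_mulVec_linearReconstruction (y : Fin M → ℝ) (σ : Equiv.Perm (Fin M)) :
    σ.permMatrix ℝ *ᵥ (F *ᵥ linearReconstruction R y σ) = ((F * R) *ᵥ (y ∘ σ.symm)) ∘ σ := by
  rw [permMatrix_mulVec, linearReconstruction, inv_permMatrix_mulVec, mulVec_mulVec]

theorem isVariantIEncoding_zero (c : Composition M) (σ : Equiv.Perm (Fin M)) :
    IsVariantIEncoding F c 0 σ :=
  isDescending_iff.2 (by simp)

theorem IsOrderPreserving.isConsistent (h : IsOrderPreserving (F * R)) {c : Composition M}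
    {y : Fin M → ℝ} (hy : IsVariantICodeword c y) : IsConsistent F R c y := by
  intro x σ _
  rw [permMatrix_mulVec_linearReconstruction, isDescending_iff]
  intro k l hkl
  exact h _ _ _ (by simpa using isDescending_iff.1 hy.isDescending k l hkl)

theorem mem_closure_strictAnti_of_antitone {α : Type*} [Preorder α] {g y : α → ℝ}
    (hg : StrictAnti g) (hy : Antitone y) : y ∈ closure {z : α → ℝ | StrictAnti z} := by
  have hlim : Filter.Tendsto (fun ε : ℝ => y + ε • g) (nhdsWithin 0 (Set.Ioi 0)) (nhds y) := by
    have : Continuous fun ε : ℝ => y + ε • g := by fun_prop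
    simpa using (this.tendsto 0).mono_left nhdsWithin_le_nhds
  refine mem_closure_of_tendsto hlim (eventually_mem_nhdsWithin.mono fun ε hε => ?_)
  exact hy.add_strictAnti (hg.const_mul hε)

theorem antitone_mulVec_comp_of_isConsistent
    (h : ∀ y, IsVariantICodeword (Composition.ones M) y → IsConsistent F R (Composition.ones M) y)
    {z : Fin M → ℝ} {σ : Equiv.Perm (Fin M)} (hz : Antitone (z ∘ σ)) :
    Antitone (((F * R) *ᵥ z) ∘ σ) := by
  let S : Set (Fin M → ℝ) := {y | Antitone (((F * R) *ᵥ (y ∘ σ.symm)) ∘ σ)}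
  have strict : {y | StrictAnti y} ⊆ S := fun y hy => by
    rw [Set.mem_ofPred_eq, ← permMatrix_mulVec_linearReconstruction]
    exact isDescending_ones_iff.1
      (h y (isVariantICodeword_ones hy) 0 σ (isVariantIEncoding_zero _ σ))
  have closed : IsClosed S := isClosed_antitone.preimage (by fun_prop)
  have hg : StrictAnti fun i : Fin M => -(i : ℝ) := fun i j hij => by simpa using hij
  have : z ∘ σ ∈ S := closure_minimal strict closed (mem_closure_strictAnti_of_antitone hg hz)
  simpa [S, Function.comp_assoc] using this

theorem isOrderPreserving_of_isConsistent
    (h : ∀ y, IsVariantICodeword (Composition.ones M) y → IsConsistent F R (Composition.ones M) y) :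
    IsOrderPreserving (F * R) := by
  intro z k l hlk
  obtain ⟨σ, hσ⟩ : ∃ σ : Equiv.Perm (Fin M), Antitone (z ∘ σ) :=
    ⟨Tuple.sort (-z), fun i j hij => by simpa using Tuple.monotone_sort (-z) hij⟩
  obtain hkl | hkl := le_total (σ.symm k) (σ.symm l)
  · simpa using antitone_mulVec_comp_of_isConsistent h hσ hkl
  -- If `l` comes before `k`, then `z k = z l`, and sorting with the two exchanged is allowed too.
  have tie : z k = z l := le_antisymm (by simpa using hσ hkl) hlk
  have hswap : z ∘ Equiv.swap k l = z := by
    ext i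
    simp only [Function.comp_apply, Equiv.swap_apply_def]
    split_ifs <;> simp_all
  have hσ' : Antitone (z ∘ (Equiv.swap k l * σ)) := by
    rwa [Equiv.Perm.coe_mul, ← Function.comp_assoc, hswap]
  simpa using antitone_mulVec_comp_of_isConsistent h hσ' hkl

theorem forall_isConsistent_iff_isOrderPreserving :
    (∀ (c : Composition M) (y : Fin M → ℝ), IsVariantICodeword c y → IsConsistent F R c y) ↔
      IsOrderPreserving (F * R) :=
  ⟨fun h => isOrderPreserving_of_isConsistent (h _), fun h _ _ hy => h.isConsistent hy⟩

end Consistency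

theorem stmt9_general {M N : ℕ} (hNM : N < M)
    (F : Matrix (Fin M) (Fin N) ℝ) (hF : F.rank = N)
    (hne : ∃ k ℓ : Fin M, F.row k ≠ F.row ℓ) :
    (∀ (c : Composition M) (y : Fin M → ℝ), IsVariantICodeword c y →
      IsConsistent F (pinv F) c y) ↔
    (M = N + 1 ∧
      F * pinv F = 1 - (1 / (M : ℝ)) • Matrix.of (fun _ _ : Fin M => (1 : ℝ))) := by
  have : Nontrivial (Fin M) := let ⟨k, l, hkl⟩ := hne; ⟨k, l, ne_of_apply_ne F.row hkl⟩
  have hinv : pinv F * F = 1 := pinv_mul_self hF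
  rw [forall_isConsistent_iff_isOrderPreserving]
  constructor
  · intro h
    obtain ⟨a, v, -, hav⟩ := h.exists_eq_smul_one_add_replicateRow
    obtain rfl : a = 1 := eq_one_of_smul_one_add_replicateRow_mul_eq hne (v := v) <| by
      rw [← hav, Matrix.mul_assoc, hinv, Matrix.mul_one]
    rw [one_smul] at hav
    obtain ⟨hsum, hcard⟩ := sum_eq_neg_one_and_card_eq_of_mul_eq_one hinv hav (by simpa using hNM)
    have hsymm : (replicateRow (Fin M) v).IsSymm := by
      simpa [hav] using (isSymm_mul_pinv F).sub isSymm_one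
    refine ⟨by simpa using hcard, ?_⟩
    rw [hav, replicateRow_eq_smul_of_isSymm hsymm, hsum, Fintype.card_fin, neg_div, neg_smul,
      sub_eq_add_neg]
  · rintro ⟨-, h⟩
    have hrow : F * pinv F = (1 : ℝ) • 1 + replicateRow (Fin M) fun _ => -(1 / (M : ℝ)) := by
      rw [h]; ext; simp [sub_eq_add_neg]
    exact hrow ▸ isOrderPreserving_smul_one_add_replicateRow zero_le_one _

theorem stmt9 {M N : ℕ} (hM : 3 ≤ M) (hNM : N < M)
    (F : Matrix (Fin M) (Fin N) ℝ) (hF : F.rank = N)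
    (hne : ∃ k ℓ : Fin M, F.row k ≠ F.row ℓ) :
    (∀ (c : Composition M) (y : Fin M → ℝ), IsVariantICodeword c y →
      IsConsistent F (pinv F) c y) ↔
    (M = N + 1 ∧
      F * pinv F = 1 - (1 / (M : ℝ)) • Matrix.of (fun _ _ : Fin M => (1 : ℝ))) := by
  exact stmt9_general hNM F hF hne
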